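/- Let N ≥ 7 and let P be the set of orthogonal partitions λ of N satisfying λ₁ ≤ 2 or N − p(λ) < ⌊N/2⌋. Then the maximal elements of P with respect to the dominance order are exactly: (2m−1, 1^{2m+1}) and (2^{2m}) if N = 4m; (2m−1, 1^{2m+2}) and (2^{2m}, 1) if N = 4m+1; the single partition (2m+1, 1^{2m+1}) if N = 4m+2; and the single partition (2m+1, 1^{2m+2}) if N = 4m+3. (These are precisely the partitions of the maximal nilpotent SO_N-orbits O whose conical secant variety CS(O) is not all of so_N, i.e., whose secant variety is defective; for N = 4m the very even partition (2^{2m}) corresponds to two associated SO_N-orbits.) -/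

import Mathlib

noncomputable section

/-- A partition of `n`, represented as an antitone function `ℕ → ℕ` (the parts in weakly
decreasing order, padded by zeros), vanishing from index `n` on and summing to `n`. -/
def IsPartitionOf (n : ℕ) (f : ℕ → ℕ) : Prop :=
  Antitone f ∧ f n = 0 ∧ ∑ i ∈ Finset.range n, f i = n

/-- The number of (nonzero) parts of a partition of `n`. -/
def numParts (n : ℕ) (f : ℕ → ℕ) : ℕ :=
  ((Finset.range n).filter (fun i => f i ≠ 0)).card

/-- The multiplicity of `m` as a part of a partition of `n`. -/
def multPart (n : ℕ) (f : ℕ → ℕ) (m : ℕ) : ℕ :=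
  ((Finset.range n).filter (fun i => f i = m)).card

/-- An orthogonal partition of `n`: every (nonzero) even part occurs with even
multiplicity. -/
def OrthogonalPartition (n : ℕ) (f : ℕ → ℕ) : Prop :=
  IsPartitionOf n f ∧ ∀ m : ℕ, 0 < m → Even m → Even (multPart n f m)

/-- The dominance order on partitions. -/
def Dominates (f g : ℕ → ℕ) : Prop :=
  ∀ m : ℕ, ∑ i ∈ Finset.range m, f i ≤ ∑ i ∈ Finset.range m, g i

/-- The maximal elements of a set of partitions with respect to the dominance order. -/
def maximalsIn (P : Set (ℕ → ℕ)) : Set (ℕ → ℕ) :=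
  {f | f ∈ P ∧ ∀ g ∈ P, Dominates f g → f = g}

/-- The partition `(2^r)`. -/
def twoPow (r : ℕ) : ℕ → ℕ := fun i => if i < r then 2 else 0

/-- The partition `(2^r, 1)`. -/
def twoPowOne (r : ℕ) : ℕ → ℕ := fun i => if i < r then 2 else if i = r then 1 else 0

/-- The hook partition `(a, 1^b)`. -/
def hookPart (a b : ℕ) : ℕ → ℕ := fun i => if i = 0 then a else if i ≤ b then 1 else 0

/-- The orthogonal partitions of `N` with `λ₁ ≤ 2` or `N − p(λ) < ⌊N/2⌋` (the nilpotent
`SO_N`-orbits with defective secant variety). -/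
def defectiveSO (N : ℕ) : Set (ℕ → ℕ) :=
  {f | OrthogonalPartition N f ∧ (f 0 ≤ 2 ∨ N - numParts N f < N / 2)}

lemma Dominates.trans {f g h : ℕ → ℕ} (hfg : Dominates f g) (hgh : Dominates g h) :
    Dominates f h := fun k => (hfg k).trans (hgh k)

lemma Dominates.antisymm {f g : ℕ → ℕ} (hfg : Dominates f g) (hgf : Dominates g f) :
    f = g := by
  have hsum : ∀ k, ∑ i ∈ Finset.range k, f i = ∑ i ∈ Finset.range k, g i :=
    fun k => le_antisymm (hfg k) (hgf k)
  funext k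
  have hk := hsum (k + 1)
  rw [Finset.sum_range_succ, Finset.sum_range_succ, hsum k] at hk
  exact Nat.add_left_cancel hk

lemma maximalsIn_eq_singleton {P : Set (ℕ → ℕ)} {h : ℕ → ℕ} (hP : h ∈ P)
    (hdom : ∀ f ∈ P, Dominates f h) : maximalsIn P = {h} := by
  ext f
  simp only [maximalsIn, Set.mem_ofPred_eq, Set.mem_singleton_iff]
  constructor
  · rintro ⟨hf, hmax⟩
    exact hmax h hP (hdom f hf)
  · rintro rfl
    exact ⟨hP, fun g hg hfg => hfg.antisymm (hdom g hg)⟩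

lemma maximalsIn_eq_pair {P : Set (ℕ → ℕ)} {h t : ℕ → ℕ} (hh : h ∈ P) (ht : t ∈ P)
    (hdom : ∀ f ∈ P, Dominates f h ∨ Dominates f t)
    (hht : ¬ Dominates h t) (hth : ¬ Dominates t h) : maximalsIn P = {h, t} := by
  ext f
  simp only [maximalsIn, Set.mem_ofPred_eq, Set.mem_insert_iff, Set.mem_singleton_iff]
  constructor
  · rintro ⟨hf, hmax⟩
    exact (hdom f hf).imp (hmax h hh) (hmax t ht)
  · rintro (rfl | rfl)
    · refine ⟨hh, fun g hg hfg => ?_⟩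
      rcases hdom g hg with hg' | hg'
      · exact hfg.antisymm hg'
      · exact absurd (hfg.trans hg') hht
    · refine ⟨ht, fun g hg hfg => ?_⟩
      rcases hdom g hg with hg' | hg'
      · exact absurd (hfg.trans hg') hth
      · exact hfg.antisymm hg'

lemma IsPartitionOf.sum_range_le {n : ℕ} {f : ℕ → ℕ} (hf : IsPartitionOf n f) (k : ℕ) :
    ∑ i ∈ Finset.range k, f i ≤ n := by
  obtain ⟨hanti, hzero, hsum⟩ := hf
  rcases le_total k n with hk | hk
  · calc ∑ i ∈ Finset.range k, f i ≤ ∑ i ∈ Finset.range n, f i :=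
          Finset.sum_le_sum_of_subset (Finset.range_subset_range.2 hk)
      _ = n := hsum
  · rw [← Finset.sum_range_add_sum_Ico f hk, hsum]
    have : ∑ i ∈ Finset.Ico n k, f i = 0 := Finset.sum_eq_zero fun i hi =>
      Nat.le_zero.1 (hzero ▸ hanti (Finset.mem_Ico.1 hi).1)
    omega

lemma numParts_eq_sum (n : ℕ) (f : ℕ → ℕ) :
    numParts n f = ∑ i ∈ Finset.range n, if f i ≠ 0 then 1 else 0 :=
  Finset.card_filter _ _

lemma IsPartitionOf.sum_range_add_numParts_le {n k : ℕ} {f : ℕ → ℕ}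
    (hf : IsPartitionOf n f) (hk : k ≤ n) :
    ∑ i ∈ Finset.range k, f i + numParts n f ≤ n + k := by
  have hsum := hf.2.2
  rw [← Finset.sum_range_add_sum_Ico f hk] at hsum
  rw [numParts_eq_sum, ← Finset.sum_range_add_sum_Ico _ hk]
  have hhead : ∑ i ∈ Finset.range k, (if f i ≠ 0 then 1 else 0) ≤ k := by
    calc _ ≤ ∑ _i ∈ Finset.range k, 1 := Finset.sum_le_sum fun i _ => by split_ifs <;> omega
      _ = k := by simp
  have htail : ∑ i ∈ Finset.Ico k n, (if f i ≠ 0 then 1 else 0) ≤ ∑ i ∈ Finset.Ico k n, f i :=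
    Finset.sum_le_sum fun i _ => by split_ifs <;> omega
  omega

lemma IsPartitionOf.le_two_mul_numParts {n : ℕ} {f : ℕ → ℕ} (hf : IsPartitionOf n f)
    (h2 : f 0 ≤ 2) : n ≤ 2 * numParts n f := by
  calc n = ∑ i ∈ Finset.range n, f i := hf.2.2.symm
    _ ≤ ∑ i ∈ Finset.range n, 2 * (if f i ≠ 0 then 1 else 0) := by
        refine Finset.sum_le_sum fun i _ => ?_
        have := hf.1 (Nat.zero_le i)
        split_ifs <;> omega
    _ = 2 * numParts n f := by rw [numParts_eq_sum, Finset.mul_sum]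

lemma numParts_le (n : ℕ) (f : ℕ → ℕ) : numParts n f ≤ n :=
  (Finset.card_filter_le _ _).trans (Finset.card_range n).le

/-- The rank `n - p(f)` of a nilpotent orthogonal matrix is even. -/
lemma OrthogonalPartition.even_add_numParts {n : ℕ} {f : ℕ → ℕ}
    (hf : OrthogonalPartition n f) : Even (n + numParts n f) := by
  obtain ⟨hpart, heven⟩ := hf
  set S := (Finset.range n).filter fun i => f i ≠ 0 ∧ Even (f i) with hS
  have hcard : Even S.card := by
    rw [Finset.card_eq_sum_card_image f S]
    refine Finset.even_sum _ fun m hm => ?_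
    obtain ⟨i, hi, rfl⟩ := Finset.mem_image.1 hm
    obtain ⟨-, hne, hev⟩ := Finset.mem_filter.1 hi
    have hfiber : S.filter (fun j => f j = f i) =
        (Finset.range n).filter fun j => f j = f i := by
      ext j
      simp only [hS, Finset.mem_filter]
      grind
    rw [hfiber]
    exact heven _ (Nat.pos_of_ne_zero hne) hev
  have hterm : ∀ i, Even (f i + (if f i ≠ 0 then 1 else 0) +
      (if f i ≠ 0 ∧ Even (f i) then 1 else 0)) := by
    intro i
    split_ifs <;> grind
  have htotal : Even (n + numParts n f + S.card) := by
    have := Finset.even_sum (s := Finset.range n) _ fun i _ => hterm i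
    rwa [Finset.sum_add_distrib, Finset.sum_add_distrib, hpart.2.2, ← numParts_eq_sum,
      ← Finset.card_filter] at this
  exact (Nat.even_add.1 htotal).2 hcard

lemma sum_range_hookPart {a b k : ℕ} (hk : k ≤ b) :
    ∑ i ∈ Finset.range (k + 1), hookPart a b i = a + k := by
  rw [Finset.sum_range_succ']
  have : ∀ i ∈ Finset.range k, hookPart a b (i + 1) = 1 := fun i hi => by
    have := Finset.mem_range.1 hi
    simp only [hookPart]
    grind
  rw [Finset.sum_congr rfl this]
  simp [hookPart, add_comm]

lemma le_sum_range_hookPart {a b k : ℕ} (hk : b < k) :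
    a + b ≤ ∑ i ∈ Finset.range k, hookPart a b i := by
  rw [← sum_range_hookPart le_rfl]
  exact Finset.sum_le_sum_of_subset (Finset.range_subset_range.2 hk)

lemma isPartitionOf_hookPart {a b : ℕ} (ha : 0 < a) :
    IsPartitionOf (a + b) (hookPart a b) := by
  refine ⟨fun i j hij => ?_, ?_, ?_⟩
  · simp only [hookPart]
    grind
  · simp only [hookPart]
    grind
  · rw [← Finset.sum_range_add_sum_Ico _ (show b + 1 ≤ a + b by omega),
      sum_range_hookPart le_rfl, Finset.sum_eq_zero, add_zero]
    intro i hi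
    have := Finset.mem_Ico.1 hi
    simp only [hookPart]
    grind

lemma orthogonalPartition_hookPart {a b : ℕ} (ha : Odd a) :
    OrthogonalPartition (a + b) (hookPart a b) := by
  refine ⟨isPartitionOf_hookPart ha.pos, fun m hm hev => ?_⟩
  have : multPart (a + b) (hookPart a b) m = 0 := by
    rw [multPart, Finset.card_eq_zero, Finset.filter_eq_empty_iff]
    intro i _
    simp only [hookPart]
    grind
  simp [this]

lemma numParts_hookPart {a b : ℕ} (ha : 0 < a) : numParts (a + b) (hookPart a b) = b + 1 := by
  have : (Finset.range (a + b)).filter (fun i => hookPart a b i ≠ 0) = Finset.range (b + 1) := by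
    ext i
    simp only [hookPart, Finset.mem_range]
    grind
  rw [numParts, this, Finset.card_range]

lemma hookPart_mem_defectiveSO {N a b : ℕ} (hN : N = a + b) (ha : Odd a)
    (hrank : a - 1 < N / 2) : hookPart a b ∈ defectiveSO N := by
  subst hN
  refine ⟨orthogonalPartition_hookPart ha, Or.inr ?_⟩
  rw [numParts_hookPart ha.pos]
  omega

lemma IsPartitionOf.dominates_hookPart {N a b : ℕ} {f : ℕ → ℕ} (hf : IsPartitionOf N f)
    (hN : N = a + b) (hparts : b + 1 ≤ numParts N f) : Dominates f (hookPart a b) := by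
  intro k
  rcases lt_or_ge b k with hk | hk
  · exact (hN ▸ hf.sum_range_le k).trans (le_sum_range_hookPart hk)
  · cases k with
    | zero => simp
    | succ k =>
      have := numParts_le N f
      have := hf.sum_range_add_numParts_le (k := k + 1) (by omega)
      rw [sum_range_hookPart (by omega)]
      omega

lemma IsPartitionOf.sum_range_le_two_mul {n : ℕ} {f : ℕ → ℕ} (hf : IsPartitionOf n f)
    (h2 : f 0 ≤ 2) (k : ℕ) : ∑ i ∈ Finset.range k, f i ≤ 2 * k := by
  calc _ ≤ ∑ _i ∈ Finset.range k, 2 :=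
        Finset.sum_le_sum fun i _ => (hf.1 (Nat.zero_le i)).trans h2
    _ = 2 * k := by simp [mul_comm]

lemma sum_range_twoPow (r k : ℕ) : ∑ i ∈ Finset.range k, twoPow r i = min (2 * k) (2 * r) := by
  induction k with
  | zero => simp
  | succ k ih =>
    rw [Finset.sum_range_succ, ih]
    simp only [twoPow]
    split_ifs <;> omega

lemma sum_range_twoPowOne (r k : ℕ) :
    ∑ i ∈ Finset.range k, twoPowOne r i = min (2 * k) (2 * r + 1) := by
  induction k with
  | zero => simp
  | succ k ih =>
    rw [Finset.sum_range_succ, ih]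
    simp only [twoPowOne]
    split_ifs <;> omega

lemma twoPow_mem_defectiveSO {r : ℕ} (hr : Even r) : twoPow r ∈ defectiveSO (2 * r) := by
  refine ⟨⟨⟨fun i j hij => ?_, ?_, ?_⟩, fun m hm _ => ?_⟩, Or.inl ?_⟩
  · simp only [twoPow]
    grind
  · simp only [twoPow]
    grind
  · rw [sum_range_twoPow]
    omega
  · by_cases h2 : m = 2
    · have : (Finset.range (2 * r)).filter (fun i => twoPow r i = m) = Finset.range r := by
        ext i
        simp only [twoPow, Finset.mem_range]
        grind
      rwa [multPart, this, Finset.card_range]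
    · have : (Finset.range (2 * r)).filter (fun i => twoPow r i = m) = ∅ := by
        ext i
        simp only [twoPow, Finset.notMem_empty]
        grind
      simp [multPart, this]
  · simp only [twoPow]
    grind

lemma twoPowOne_mem_defectiveSO {r : ℕ} (hr : Even r) :
    twoPowOne r ∈ defectiveSO (2 * r + 1) := by
  refine ⟨⟨⟨fun i j hij => ?_, ?_, ?_⟩, fun m hm hev => ?_⟩, Or.inl ?_⟩
  · simp only [twoPowOne]
    grind
  · simp only [twoPowOne]
    grind
  · rw [sum_range_twoPowOne]
    omega
  · by_cases h2 : m = 2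
    · have : (Finset.range (2 * r + 1)).filter (fun i => twoPowOne r i = m) =
          Finset.range r := by
        ext i
        simp only [twoPowOne, Finset.mem_range]
        grind
      rwa [multPart, this, Finset.card_range]
    · have : (Finset.range (2 * r + 1)).filter (fun i => twoPowOne r i = m) = ∅ := by
        ext i
        simp only [twoPowOne, Finset.notMem_empty]
        grind
      simp [multPart, this]
  · simp only [twoPowOne]
    grind

/-- The maximal defective nilpotent `SO_N`-orbits: `(2m−1, 1^{2m+1})` and `(2^{2m})`
for `N = 4m`; `(2m−1, 1^{2m+2})` and `(2^{2m}, 1)` for `N = 4m+1`;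
`(2m+1, 1^{2m+1})` for `N = 4m+2`; `(2m+1, 1^{2m+2})` for `N = 4m+3`. -/
theorem stmt12 (N : ℕ) (hN : 7 ≤ N) :
    (∀ m : ℕ, N = 4 * m →
      maximalsIn (defectiveSO N) = {hookPart (2 * m - 1) (2 * m + 1), twoPow (2 * m)}) ∧
    (∀ m : ℕ, N = 4 * m + 1 →
      maximalsIn (defectiveSO N) = {hookPart (2 * m - 1) (2 * m + 2), twoPowOne (2 * m)}) ∧
    (∀ m : ℕ, N = 4 * m + 2 →
      maximalsIn (defectiveSO N) = {hookPart (2 * m + 1) (2 * m + 1)}) ∧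
    (∀ m : ℕ, N = 4 * m + 3 →
      maximalsIn (defectiveSO N) = {hookPart (2 * m + 1) (2 * m + 2)}) := by
  refine ⟨?_, ?_, ?_, ?_⟩
  · rintro m rfl
    refine maximalsIn_eq_pair (hookPart_mem_defectiveSO (by omega) ⟨m - 1, by omega⟩ (by omega))
      ?_ (fun f hf => ?_) (fun hdom => ?_) fun hdom => ?_
    · have := twoPow_mem_defectiveSO (even_two_mul m)
      rwa [← mul_assoc] at this
    · obtain ⟨hort, h2 | hrank⟩ := hf
      · refine Or.inr fun k => ?_
        have := hort.1.sum_range_le k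
        have := hort.1.sum_range_le_two_mul h2 k
        rw [sum_range_twoPow]
        omega
      · obtain ⟨q, hq⟩ := hort.even_add_numParts
        exact Or.inl (hort.1.dominates_hookPart (by omega) (by omega))
    · have := hdom 1
      rw [sum_range_hookPart (Nat.zero_le _), sum_range_twoPow] at this
      omega
    · have := hdom (2 * m - 1 + 1)
      rw [sum_range_hookPart (by omega), sum_range_twoPow] at this
      omega
  · rintro m rfl
    refine maximalsIn_eq_pair (hookPart_mem_defectiveSO (by omega) ⟨m - 1, by omega⟩ (by omega))
      ?_ (fun f hf => ?_) (fun hdom => ?_) fun hdom => ?_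
    · have := twoPowOne_mem_defectiveSO (even_two_mul m)
      rwa [← mul_assoc] at this
    · obtain ⟨hort, h2 | hrank⟩ := hf
      · refine Or.inr fun k => ?_
        have := hort.1.sum_range_le k
        have := hort.1.sum_range_le_two_mul h2 k
        rw [sum_range_twoPowOne]
        omega
      · obtain ⟨q, hq⟩ := hort.even_add_numParts
        exact Or.inl (hort.1.dominates_hookPart (by omega) (by omega))
    · have := hdom 1
      rw [sum_range_hookPart (Nat.zero_le _), sum_range_twoPowOne] at this
      omega
    · have := hdom (2 * m - 1 + 1)
      rw [sum_range_hookPart (by omega), sum_range_twoPowOne] at this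
      omega
  · rintro m rfl
    refine maximalsIn_eq_singleton
      (hookPart_mem_defectiveSO (by omega) ⟨m, rfl⟩ (by omega)) ?_
    rintro f ⟨hort, hdef⟩
    obtain ⟨q, hq⟩ := hort.even_add_numParts
    have := hort.1.le_two_mul_numParts
    exact hort.1.dominates_hookPart (by omega) (by omega)
  · rintro m rfl
    refine maximalsIn_eq_singleton
      (hookPart_mem_defectiveSO (by omega) ⟨m, rfl⟩ (by omega)) ?_
    rintro f ⟨hort, hdef⟩
    obtain ⟨q, hq⟩ := hort.even_add_numParts
    have := hort.1.le_two_mul_numParts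
    exact hort.1.dominates_hookPart (by omega) (by omega)
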